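/- Let ξ be a state on ℓ^∞ invariant under the unit shift T_1 and invariant under the dilation D_j for every j ∈ ℕ. Then for every a > 0: ξ({f(k)}_{k≥1}) = ξ({∫_{k−1}^{k} f(t+a) dt}_{k≥1}) and ξ({f(k)}_{k≥1}) = ξ({∫_{k−1}^{k} f(t/a) dt}_{k≥1}). -/

import Mathlib

/-!
A bounded `f` with `t * f t` nondecreasing is slowly decreasing: `f s ≤ f t + o(1)` when `s ≤ t`,
`s → ∞` and `t / s → 1`. A shift invariant state ignores finitely many terms, so its value on `f
(u k)` does not decrease when the sample points `u k → ∞` are moved to the right by a bounded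
amount. Shift invariance turns these inequalities into equalities: a sequence of sample points can
be trapped between another one and its translate. In this way `k / j` may replace `⌈k / j⌉`, and
dilation invariance gives `ξ (f (c * k)) = ξ (f k)` for rational `c > 0`, hence for real `c > 0`
by approximating `c` from above by rationals. Finally, an average of `f` over a window of fixed
length lies, up to `o(1)`, between the values of `f` at its endpoints.
-/

open Filter

/-- A bounded real sequence (an element of `ℓ^∞`). -/
def IsBddSeq (a : ℕ → ℝ) : Prop := ∃ C, ∀ k, |a k| ≤ C

/-- A state on `ℓ^∞`: a positive linear functional with `ξ(1) = 1`
(linearity and positivity are required on bounded sequences). -/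
def IsLinfState (ξ : (ℕ → ℝ) → ℝ) : Prop :=
  (∀ a b : ℕ → ℝ, IsBddSeq a → IsBddSeq b → ξ (a + b) = ξ a + ξ b) ∧
  (∀ (c : ℝ) (a : ℕ → ℝ), IsBddSeq a → ξ (c • a) = c * ξ a) ∧
  (∀ a : ℕ → ℝ, IsBddSeq a → (∀ k, 0 ≤ a k) → 0 ≤ ξ a) ∧
  ξ (fun _ => 1) = 1

/-- A generalised limit: a state on `ℓ^∞` with
`liminf a ≤ ξ a ≤ limsup a` for every bounded nonnegative sequence. -/
def IsGenLim (ξ : (ℕ → ℝ) → ℝ) : Prop :=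
  IsLinfState ξ ∧
  ∀ a : ℕ → ℝ, IsBddSeq a → (∀ k, 0 ≤ a k) →
    liminf a atTop ≤ ξ a ∧ ξ a ≤ limsup a atTop

/-- Invariance under the unit shift `T_1`. -/
def ShiftInv (ξ : (ℕ → ℝ) → ℝ) : Prop :=
  ∀ a : ℕ → ℝ, IsBddSeq a → ξ (fun k => a (k + 1)) = ξ a

/-- Invariance under the dilations `D_j`, `D_j(a)_k = a_{⌈k/j⌉}`
(`⌈k/j⌉ = (k + j - 1)/j` in natural division). -/
def DilInv (ξ : (ℕ → ℝ) → ℝ) : Prop :=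
  ∀ j : ℕ, 0 < j → ∀ a : ℕ → ℝ, IsBddSeq a →
    ξ (fun k => a ((k + j - 1) / j)) = ξ a

open Asymptotics MeasureTheory Set

section States

variable {ξ : (ℕ → ℝ) → ℝ} {x y z : ℕ → ℝ}

theorem isBddSeq_iff_isBigO_one : IsBddSeq x ↔ x =O[atTop] fun _ => (1 : ℝ) :=
  (isBigO_one_nat_atTop_iff (f := x)).symm

theorem IsBddSeq.comp (hx : IsBddSeq x) (φ : ℕ → ℕ) : IsBddSeq fun k => x (φ k) :=
  hx.imp fun _ hC k => hC (φ k)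

theorem isBddSeq_const (c : ℝ) : IsBddSeq fun _ => c := ⟨|c|, fun _ => le_rfl⟩

theorem IsBddSeq.add (hx : IsBddSeq x) (hy : IsBddSeq y) : IsBddSeq (x + y) := by
  rw [isBddSeq_iff_isBigO_one] at hx hy ⊢
  exact IsBigO.add hx hy

theorem IsBddSeq.sub (hx : IsBddSeq x) (hy : IsBddSeq y) : IsBddSeq (x - y) := by
  rw [isBddSeq_iff_isBigO_one] at hx hy ⊢
  exact IsBigO.sub hx hy

theorem IsBddSeq.of_eventually_le_of_le (hx : IsBddSeq x) (hz : IsBddSeq z)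
    (hxy : ∀ᶠ k in atTop, x k ≤ y k) (hyz : ∀ᶠ k in atTop, y k ≤ z k) : IsBddSeq y := by
  obtain ⟨A, hA⟩ := hx
  obtain ⟨B, hB⟩ := hz
  refine isBddSeq_iff_isBigO_one.2 (IsBigO.of_bound (max A B) ?_)
  filter_upwards [hxy, hyz] with k hxk hzk
  rw [norm_one, mul_one, Real.norm_eq_abs]
  exact (abs_le_max_abs_abs hxk hzk).trans (max_le_max (hA k) (hB k))

theorem IsLinfState.mono (hst : IsLinfState ξ) (hx : IsBddSeq x) (hy : IsBddSeq y)
    (h : ∀ k, x k ≤ y k) : ξ x ≤ ξ y := by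
  obtain ⟨hadd, -, hpos, -⟩ := hst
  have hsplit : ξ y = ξ x + ξ (y - x) := by rw [← hadd _ _ hx (hy.sub hx), add_sub_cancel]
  linarith [hpos _ (hy.sub hx) fun k => sub_nonneg.2 (h k)]

theorem IsLinfState.map_add_const (hst : IsLinfState ξ) (hx : IsBddSeq x) (c : ℝ) :
    ξ (fun k => x k + c) = ξ x + c := by
  obtain ⟨hadd, hsmul, -, hone⟩ := hst
  have hconst : ξ (fun _ => c) = c := by
    simpa [Pi.smul_def, hone] using hsmul c _ (isBddSeq_const 1)
  rw [← hconst, ← hadd _ _ hx (isBddSeq_const c), hconst]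
  rfl

theorem ShiftInv.map_shift (hT : ShiftInv ξ) (hx : IsBddSeq x) (n : ℕ) :
    ξ (fun k => x (k + n)) = ξ x := by
  induction n with
  | zero => rfl
  | succ n ih =>
    rw [← ih, ← hT _ (hx.comp (· + n))]
    simp only [add_right_comm, add_assoc]

theorem IsLinfState.le_add_of_eventually_le_add (hst : IsLinfState ξ) (hT : ShiftInv ξ)
    (hx : IsBddSeq x) (hy : IsBddSeq y) {ε : ℝ} (h : ∀ᶠ k in atTop, x k ≤ y k + ε) :
    ξ x ≤ ξ y + ε := by
  obtain ⟨N, hN⟩ := eventually_atTop.1 h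
  rw [← hT.map_shift hx N, ← hT.map_shift hy N, ← hst.map_add_const (hy.comp (· + N))]
  exact hst.mono (hx.comp _) ((hy.comp _).add (isBddSeq_const ε))
    fun k => hN _ (Nat.le_add_left N k)

theorem IsLinfState.le_of_eventually_le_add (hst : IsLinfState ξ) (hT : ShiftInv ξ)
    (hx : IsBddSeq x) (hy : IsBddSeq y) (h : ∀ ε > 0, ∀ᶠ k in atTop, x k ≤ y k + ε) :
    ξ x ≤ ξ y :=
  le_of_forall_pos_le_add fun ε hε => hst.le_add_of_eventually_le_add hT hx hy (h ε hε)

end States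

/-- Slow decrease at infinity in the sense of R. Schmidt, the usual one-sided Tauberian condition:
`liminf (f t - f s) ≥ 0` as `s → ∞` and `t / s → 1` with `t ≥ s`. -/
def SlowlyDecreasing (f : ℝ → ℝ) : Prop :=
  ∀ ε > 0, ∃ δ > 1, ∀ᶠ s in atTop, ∀ t ∈ Icc s (δ * s), f s ≤ f t + ε

section SlowDecrease

variable {f : ℝ → ℝ} {c d ε : ℝ}

theorem slowlyDecreasing_of_monotoneOn_mul (hfb : f =O[atTop] fun _ => (1 : ℝ))
    (hmono : MonotoneOn (fun t => t * f t) (Ioi 0)) : SlowlyDecreasing f := by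
  obtain ⟨C, hC, hfC⟩ := hfb.exists_pos
  intro ε hε
  refine ⟨1 + ε / C, lt_add_of_pos_right 1 (by positivity), ?_⟩
  filter_upwards [eventually_forall_ge_atTop.2 hfC.bound, eventually_gt_atTop 0]
    with s hs hs0 t ⟨hst, hts⟩
  have hft : f t ≤ C := by simpa using (le_abs_self _).trans (hs t hst)
  refine le_of_mul_le_mul_left ?_ hs0
  calc s * f s ≤ t * f t := hmono hs0 (hs0.trans_le hst) hst
    _ = s * f t + (t - s) * f t := by ring
    _ ≤ s * f t + (t - s) * C := by gcongr
    _ ≤ s * f t + ((1 + ε / C) * s - s) * C := by gcongr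
    _ = s * (f t + ε) := by field_simp; ring

theorem locallyIntegrableOn_of_monotoneOn_mul (hmono : MonotoneOn (fun t => t * f t) (Ioi 0)) :
    LocallyIntegrableOn f (Ioi 0) := by
  refine (locallyIntegrableOn_iff isOpen_Ioi.isLocallyClosed).2 fun K hK hKc => ?_
  have hinv : ContinuousOn (fun t : ℝ => t⁻¹) K := continuousOn_id.inv₀ fun t ht => (hK ht).ne'
  exact (((hmono.mono hK).integrableOn_isCompact hKc).continuousOn_mul hinv hKc).congr_fun
    (fun t ht => inv_mul_cancel_left₀ (hK ht).ne' (f t)) hKc.measurableSet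

namespace SlowlyDecreasing

theorem comp_const_mul (hf : SlowlyDecreasing f) (hc : 0 < c) :
    SlowlyDecreasing fun t => f (c * t) := by
  intro ε hε
  obtain ⟨δ, hδ, h⟩ := hf ε hε
  refine ⟨δ, hδ, ?_⟩
  filter_upwards [(tendsto_id.const_mul_atTop hc).eventually h] with s hs t ht
  refine hs _ ⟨by gcongr; exact ht.1, ?_⟩
  calc c * t ≤ c * (δ * s) := by gcongr; exact ht.2
    _ = δ * (c * s) := mul_left_comm _ _ _

theorem eventually_forall_Icc_le_add (hf : SlowlyDecreasing f) (d : ℝ) (hε : 0 < ε) :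
    ∀ᶠ s in atTop, ∀ t ∈ Icc s (s + d), f s ≤ f t + ε := by
  obtain ⟨δ, hδ, h⟩ := hf ε hε
  have hgap : ∀ᶠ s in atTop, d ≤ (δ - 1) * s :=
    (tendsto_id.const_mul_atTop (sub_pos.2 hδ)).eventually_ge_atTop d
  filter_upwards [h, hgap] with s hs hds t ht
  exact hs t ⟨ht.1, by linarith [ht.2]⟩

theorem eventually_intervalAverage_mem_Icc (hf : SlowlyDecreasing f)
    (hfi : LocallyIntegrableOn f (Ioi 0)) (hd : 0 < d) (hε : 0 < ε) :
    ∀ᶠ s in atTop, (⨍ t in s..(s + d), f t) ∈ Icc (f s - ε) (f (s + d) + ε) := by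
  filter_upwards [eventually_forall_ge_atTop.2 (hf.eventually_forall_Icc_le_add d hε),
    eventually_gt_atTop 0] with s hs hs0
  have hvalues : ∀ t ∈ Ioc s (s + d), f t ∈ Icc (f s - ε) (f (s + d) + ε) := fun t ht =>
    ⟨sub_le_iff_le_add.2 (hs s le_rfl t (Ioc_subset_Icc_self ht)),
      hs t ht.1.le _ ⟨ht.2, by linarith [ht.1]⟩⟩
  have hint : IntegrableOn f (Ioc s (s + d)) :=
    (hfi.integrableOn_compact_subset (fun t ht => hs0.trans_le ht.1) isCompact_Icc).mono_set
      Ioc_subset_Icc_self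
  rw [uIoc_of_le (by linarith)]
  exact (convex_Icc _ _).set_average_mem isClosed_Icc (by simp [hd]) (by simp)
    (ae_restrict_of_forall_mem measurableSet_Ioc hvalues) hint

end SlowlyDecreasing

end SlowDecrease

theorem isBddSeq_comp_of_isBigO_one {f : ℝ → ℝ} {u : ℕ → ℝ} (hfb : f =O[atTop] fun _ => (1 : ℝ))
    (hu : Tendsto u atTop atTop) : IsBddSeq fun k => f (u k) :=
  isBddSeq_iff_isBigO_one.2 (hfb.comp_tendsto hu)

theorem tendsto_mul_natCast_add_atTop {c : ℝ} (hc : 0 < c) (b : ℝ) :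
    Tendsto (fun k : ℕ => c * k + b) atTop atTop :=
  tendsto_atTop_add_const_right _ b (tendsto_natCast_atTop_atTop.const_mul_atTop hc)

theorem natCast_ceilDiv_mem_Icc {j : ℕ} (hj : 0 < j) (k : ℕ) :
    (((k + j - 1) / j : ℕ) : ℝ) ∈ Icc ((j : ℝ)⁻¹ * k) ((j : ℝ)⁻¹ * k + 1) := by
  have hj' : (0 : ℝ) < j := mod_cast hj
  constructor
  · rw [inv_mul_le_iff₀ hj']
    exact_mod_cast le_smul_ceilDiv hj
  · calc (((k + j - 1) / j : ℕ) : ℝ) ≤ ((k + j - 1 : ℕ) : ℝ) / j := Nat.cast_div_le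
      _ ≤ ((k + j : ℕ) : ℝ) / j := by gcongr; omega
      _ = (j : ℝ)⁻¹ * k + 1 := by push_cast; field_simp

section Sampling

variable {ξ : (ℕ → ℝ) → ℝ} {f : ℝ → ℝ} {c d : ℝ}

namespace SlowlyDecreasing

theorem map_comp_le_map_comp (hf : SlowlyDecreasing f) (hfb : f =O[atTop] fun _ => (1 : ℝ))
    (hst : IsLinfState ξ) (hT : ShiftInv ξ) {u v : ℕ → ℝ} (hu : Tendsto u atTop atTop)
    (huv : ∀ k, v k ∈ Icc (u k) (u k + d)) : ξ (fun k => f (u k)) ≤ ξ (fun k => f (v k)) := by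
  have hv : Tendsto v atTop atTop := tendsto_atTop_mono (fun k => (huv k).1) hu
  refine hst.le_of_eventually_le_add hT (isBddSeq_comp_of_isBigO_one hfb hu)
    (isBddSeq_comp_of_isBigO_one hfb hv) fun ε hε => ?_
  filter_upwards [hu.eventually (hf.eventually_forall_Icc_le_add d hε)] with k hk
  exact hk _ (huv k)

theorem map_mul_add (hf : SlowlyDecreasing f) (hfb : f =O[atTop] fun _ => (1 : ℝ))
    (hst : IsLinfState ξ) (hT : ShiftInv ξ) (hc : 0 < c) (b : ℝ) :
    ξ (fun k => f (c * k + b)) = ξ (fun k => f (c * k)) := by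
  have hlin : Tendsto (fun k : ℕ => c * k) atTop atTop := by
    simpa using tendsto_mul_natCast_add_atTop hc 0
  have haff := tendsto_mul_natCast_add_atTop hc b
  obtain ⟨n, hn⟩ := exists_nat_ge (|b| / c)
  have hbn : |b| ≤ c * n := (div_le_iff₀' hc).1 hn
  obtain ⟨hnb, hbn⟩ := abs_le.1 hbn
  apply le_antisymm
  · rw [← hT.map_shift (isBddSeq_comp_of_isBigO_one hfb hlin) n]
    refine hf.map_comp_le_map_comp (d := c * n - b) hfb hst hT haff fun k => ?_
    rw [Nat.cast_add, mul_add]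
    constructor <;> linarith
  · rw [← hT.map_shift (isBddSeq_comp_of_isBigO_one hfb haff) n]
    refine hf.map_comp_le_map_comp (d := c * n + b) hfb hst hT hlin fun k => ?_
    rw [Nat.cast_add, mul_add]
    constructor <;> linarith

theorem map_inv_natCast_mul (hf : SlowlyDecreasing f) (hfb : f =O[atTop] fun _ => (1 : ℝ))
    (hst : IsLinfState ξ) (hT : ShiftInv ξ) (hD : DilInv ξ) {j : ℕ} (hj : 0 < j) :
    ξ (fun k => f ((j : ℝ)⁻¹ * k)) = ξ (fun k => f k) := by
  have hj' : (0 : ℝ) < (j : ℝ)⁻¹ := inv_pos.2 (mod_cast hj)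
  have hlin : Tendsto (fun k : ℕ => (j : ℝ)⁻¹ * k) atTop atTop := by
    simpa using tendsto_mul_natCast_add_atTop hj' 0
  have hceil : Tendsto (fun k : ℕ => (((k + j - 1) / j : ℕ) : ℝ)) atTop atTop :=
    tendsto_atTop_mono (fun k => (natCast_ceilDiv_mem_Icc hj k).1) hlin
  rw [← hD j hj _ (isBddSeq_comp_of_isBigO_one hfb tendsto_natCast_atTop_atTop)]
  apply le_antisymm
  · exact hf.map_comp_le_map_comp hfb hst hT hlin (natCast_ceilDiv_mem_Icc hj)
  · rw [← hf.map_mul_add hfb hst hT hj' 1]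
    refine hf.map_comp_le_map_comp (d := 1) hfb hst hT hceil fun k => ?_
    obtain ⟨hlow, hupp⟩ := natCast_ceilDiv_mem_Icc hj k
    exact ⟨hupp, by linarith⟩

theorem map_nnratCast_mul (hf : SlowlyDecreasing f) (hfb : f =O[atTop] fun _ => (1 : ℝ))
    (hst : IsLinfState ξ) (hT : ShiftInv ξ) (hD : DilInv ξ) {q : ℚ≥0} (hq : 0 < q) :
    ξ (fun k => f (q * k)) = ξ (fun k => f k) := by
  have hp : (0 : ℝ) < q.num := mod_cast NNRat.num_pos.2 hq
  have hf' := hf.comp_const_mul hp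
  have hfb' : (fun t => f (q.num * t)) =O[atTop] fun _ => (1 : ℝ) :=
    hfb.comp_tendsto (tendsto_id.const_mul_atTop hp)
  calc ξ (fun k => f (q * k))
      = ξ (fun k => f (q.num * ((q.den : ℝ)⁻¹ * k))) := by
        simp only [NNRat.cast_def, div_eq_mul_inv, mul_assoc]
    _ = ξ (fun k => f (q.num * k)) := hf'.map_inv_natCast_mul hfb' hst hT hD q.den_pos
    _ = ξ (fun k => f (q.num * ((q.num : ℝ)⁻¹ * k))) :=
        (hf'.map_inv_natCast_mul hfb' hst hT hD (NNRat.num_pos.2 hq)).symm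
    _ = ξ (fun k => f k) := by simp only [mul_inv_cancel_left₀ hp.ne']

theorem map_const_mul_le (hf : SlowlyDecreasing f) (hfb : f =O[atTop] fun _ => (1 : ℝ))
    (hst : IsLinfState ξ) (hT : ShiftInv ξ) (hD : DilInv ξ) (hc : 0 < c) :
    ξ (fun k => f (c * k)) ≤ ξ (fun k => f k) := by
  refine le_of_forall_pos_le_add fun ε hε => ?_
  obtain ⟨δ, hδ, hfδ⟩ := hf ε hε
  obtain ⟨q, hcq, hqδ⟩ := exists_rat_btwn (lt_mul_of_one_lt_left hc hδ)
  have hq : 0 < q := mod_cast hc.trans hcq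
  lift q to ℚ≥0 using hq.le
  rw [Rat.cast_nnratCast] at hcq hqδ
  have hlin {b : ℝ} (hb : 0 < b) : Tendsto (fun k : ℕ => b * k) atTop atTop :=
    tendsto_natCast_atTop_atTop.const_mul_atTop hb
  rw [← hf.map_nnratCast_mul hfb hst hT hD (mod_cast hq)]
  refine hst.le_add_of_eventually_le_add hT (isBddSeq_comp_of_isBigO_one hfb (hlin hc))
    (isBddSeq_comp_of_isBigO_one hfb (hlin (hc.trans hcq))) ?_
  filter_upwards [(hlin hc).eventually hfδ] with k hk
  refine hk _ ⟨by gcongr, ?_⟩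
  rw [← mul_assoc]
  gcongr

theorem map_const_mul (hf : SlowlyDecreasing f) (hfb : f =O[atTop] fun _ => (1 : ℝ))
    (hst : IsLinfState ξ) (hT : ShiftInv ξ) (hD : DilInv ξ) (hc : 0 < c) :
    ξ (fun k => f (c * k)) = ξ (fun k => f k) := by
  -- The reverse inequality is the same one for `t ↦ f (c * t)` and the factor `c⁻¹`.
  refine le_antisymm (hf.map_const_mul_le hfb hst hT hD hc) ?_
  have hfb' : (fun t => f (c * t)) =O[atTop] fun _ => (1 : ℝ) :=
    hfb.comp_tendsto (tendsto_id.const_mul_atTop hc)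
  simpa only [mul_inv_cancel_left₀ hc.ne'] using
    (hf.comp_const_mul hc).map_const_mul_le hfb' hst hT hD (inv_pos.2 hc)

theorem map_integral_mul_add (hf : SlowlyDecreasing f) (hfb : f =O[atTop] fun _ => (1 : ℝ))
    (hfi : LocallyIntegrableOn f (Ioi 0)) (hst : IsLinfState ξ) (hT : ShiftInv ξ)
    (hc : 0 < c) (b : ℝ) :
    ξ (fun k => ∫ t in ((k : ℝ) - 1)..k, f (c * t + b)) = ξ (fun k => f (c * k)) := by
  have haverage (k : ℕ) : ∫ t in ((k : ℝ) - 1)..k, f (c * t + b) =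
      ⨍ t in (c * k + (b - c))..(c * k + (b - c) + c), f t := by
    rw [intervalIntegral.integral_comp_mul_add _ hc.ne', interval_average_eq]
    ring_nf
  simp only [haverage]
  have hleft := tendsto_mul_natCast_add_atTop hc (b - c)
  have hright := tendsto_atTop_add_const_right _ c hleft
  have hmem {ε : ℝ} (hε : 0 < ε) :=
    hleft.eventually (hf.eventually_intervalAverage_mem_Icc hfi hc hε)
  have hbdd_left := isBddSeq_comp_of_isBigO_one hfb hleft
  have hbdd_right := isBddSeq_comp_of_isBigO_one hfb hright
  have hbdd : IsBddSeq fun k : ℕ => ⨍ t in (c * k + (b - c))..(c * k + (b - c) + c), f t :=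
    .of_eventually_le_of_le (hbdd_left.sub (isBddSeq_const 1)) (hbdd_right.add (isBddSeq_const 1))
      ((hmem one_pos).mono fun _ h => h.1) ((hmem one_pos).mono fun _ h => h.2)
  apply le_antisymm
  · rw [← hf.map_mul_add hfb hst hT hc (b - c + c)]
    simp only [← add_assoc]
    exact hst.le_of_eventually_le_add hT hbdd hbdd_right
      fun ε hε => (hmem hε).mono fun _ h => h.2
  · rw [← hf.map_mul_add hfb hst hT hc (b - c)]
    exact hst.le_of_eventually_le_add hT hbdd_left hbdd
      fun ε hε => (hmem hε).mono fun _ h => sub_le_iff_le_add.1 h.1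

end SlowlyDecreasing

end Sampling

theorem shift_dilation_invariant_state_average_translate_dilate_general
    {ξ : (ℕ → ℝ) → ℝ} (hst : IsLinfState ξ) (hT : ShiftInv ξ) (hD : DilInv ξ)
    {f : ℝ → ℝ} (hfb : f =O[atTop] fun _ => (1 : ℝ)) (hf : SlowlyDecreasing f)
    (hfi : LocallyIntegrableOn f (Ioi 0)) {c : ℝ} (hc : 0 < c) (b : ℝ) :
    ξ (fun k => f k) = ξ (fun k => ∫ t in ((k : ℝ) - 1)..k, f (c * t + b)) := by
  rw [hf.map_integral_mul_add hfb hfi hst hT hc, hf.map_const_mul hfb hst hT hD hc]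

/-- for a state `ξ` on `ℓ^∞` invariant under the unit shift `T_1` and
under all dilations `D_j`, `j ∈ ℕ`, and every `a > 0`:
`ξ({f(k)}_k) = ξ({∫_{k−1}^{k} f(t+a) dt}_k)` and
`ξ({f(k)}_k) = ξ({∫_{k−1}^{k} f(t/a) dt}_k)`. -/
theorem shift_dilation_invariant_state_average_translate_dilate
    (ξ : (ℕ → ℝ) → ℝ) (hst : IsLinfState ξ) (hT : ShiftInv ξ) (hD : DilInv ξ)
    (f g : ℝ → ℝ) (hfb : ∃ C, ∀ t ≥ (0 : ℝ), |f t| ≤ C)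
    (hfg : ∀ t > (0 : ℝ), f t = g t / t) (hg : MonotoneOn g (Set.Ici 0))
    (a : ℝ) (ha : 0 < a) :
    ξ (fun k => f (k : ℝ)) = ξ (fun k => ∫ t in ((k : ℝ) - 1)..(k : ℝ), f (t + a)) ∧
    ξ (fun k => f (k : ℝ)) = ξ (fun k => ∫ t in ((k : ℝ) - 1)..(k : ℝ), f (t / a)) := by
  obtain ⟨C, hC⟩ := hfb
  have hfb : f =O[atTop] fun _ => (1 : ℝ) :=
    IsBigO.of_bound C ((eventually_ge_atTop 0).mono fun t ht => by simpa using hC t ht)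
  have hmono : MonotoneOn (fun t => t * f t) (Ioi 0) :=
    (hg.mono Ioi_subset_Ici_self).congr fun t ht => by
      rw [hfg t ht, mul_div_cancel₀ _ (mem_Ioi.1 ht).ne']
  have haverage {c : ℝ} (hc : 0 < c) (b : ℝ) :=
    shift_dilation_invariant_state_average_translate_dilate_general hst hT hD hfb
      (slowlyDecreasing_of_monotoneOn_mul hfb hmono) (locallyIntegrableOn_of_monotoneOn_mul hmono)
      hc b
  exact ⟨by simpa using haverage one_pos a,
    by simpa [div_eq_inv_mul] using haverage (inv_pos.2 ha) 0⟩
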